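/- arXiv:1902.06546 — 3 statements merged into one kernel-verified Lean document; each statement's English description precedes it below -/
import Mathlib

section
/- Let k be a field, p a prime, and a, b, e natural numbers with 1 ≤ b ≤ a and e < p − 1. Then there do not exist k[[u]]-linear maps α : k[[u]]/(u^{pa}) → k[[u]]/(u^{a}) and ψ : k[[u]]/(u^{a}) → k[[u]]/(u^{pa}) such that the composite ψ ∘ α : k[[u]]/(u^{pa}) → k[[u]]/(u^{pa}) is multiplication by u^{eb}. -/
theorem mul_mem_annihilator_of_comp_eq_smul {R M N : Type*} [Semiring R]
    [AddCommMonoid M] [Module R M] [AddCommMonoid N] [Module R N] {r s : R}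
    (α : M → N) (ψ : N →ₗ[R] M) (hψα : ∀ z, ψ (α z) = r • z)
    (hs : s ∈ Module.annihilator R N) : s * r ∈ Module.annihilator R M := by
  rw [Module.mem_annihilator] at hs ⊢
  intro z
  calc
    (s * r) • z = s • ψ (α z) := by rw [mul_smul, hψα]
    _ = ψ (s • α z) := (map_smul ψ s (α z)).symm
    _ = 0 := by rw [hs, map_zero]

theorem pow_dvd_pow_iff_of_isLeftRegular {M : Type*} [CommMonoid M] {x : M}
    (hreg : IsLeftRegular x) (hunit : ¬ IsUnit x) {m n : ℕ} : x ^ n ∣ x ^ m ↔ n ≤ m := by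
  refine ⟨fun hdvd => ?_, pow_dvd_pow x⟩
  by_contra! hmn
  have hsucc : x ^ m * x ∣ x ^ m * 1 := by
    rw [← pow_succ, mul_one]
    exact (pow_dvd_pow x hmn).trans hdvd
  exact hunit (isUnit_of_dvd_one ((hreg.pow m).dvd_cancel_left.mp hsucc))

theorem add_mul_lt_mul_of_lt_sub_one {a b e p : ℕ} (ha : 0 < a) (hba : b ≤ a)
    (he : e < p - 1) : a + e * b < p * a :=
  calc
    a + e * b ≤ a + e * a := by gcongr
    _ = (e + 1) * a := by ring
    _ < p * a := Nat.mul_lt_mul_of_pos_right (by omega) ha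

theorem statement3_general {R : Type*} [CommRing R] {x : R} (hreg : IsLeftRegular x)
    (hunit : ¬ IsUnit x) {m n c : ℕ} (hmcn : m + c < n) :
    ¬ ∃ (α : R ⧸ Ideal.span {x ^ n} → R ⧸ Ideal.span {x ^ m})
        (ψ : (R ⧸ Ideal.span {x ^ m}) →ₗ[R] (R ⧸ Ideal.span {x ^ n})),
        ∀ z, ψ (α z) = x ^ c • z := by
  rintro ⟨α, ψ, hψα⟩
  have hdvd : x ^ n ∣ x ^ (m + c) := by
    have hann : x ^ m ∈ Module.annihilator R (R ⧸ Ideal.span {x ^ m}) := by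
      rw [Ideal.annihilator_quotient]
      exact Ideal.mem_span_singleton_self _
    have hmem := mul_mem_annihilator_of_comp_eq_smul α ψ hψα hann
    rwa [Ideal.annihilator_quotient, Ideal.mem_span_singleton, ← pow_add] at hmem
  exact hmcn.not_ge ((pow_dvd_pow_iff_of_isLeftRegular hreg hunit).mp hdvd)

/-- let `k` be a field, `p` a prime, and `a, b, e` natural numbers with
`1 ≤ b ≤ a` and `e < p - 1`.  Then there are no `k⟦u⟧`-linear maps
`α : k⟦u⟧/(u^{pa}) → k⟦u⟧/(u^a)` and `ψ : k⟦u⟧/(u^a) → k⟦u⟧/(u^{pa})` whose composite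
`ψ ∘ α` is multiplication by `u^{eb}` on `k⟦u⟧/(u^{pa})`. -/
theorem statement3 (k : Type*) [Field k] (p : ℕ) (hp : p.Prime)
    (a b e : ℕ) (hb1 : 1 ≤ b) (hba : b ≤ a) (he : e < p - 1) :
    ¬ ∃ (α : (PowerSeries k ⧸ Ideal.span {(PowerSeries.X : PowerSeries k) ^ (p * a)})
          →ₗ[PowerSeries k]
          (PowerSeries k ⧸ Ideal.span {(PowerSeries.X : PowerSeries k) ^ a}))
        (ψ : (PowerSeries k ⧸ Ideal.span {(PowerSeries.X : PowerSeries k) ^ a})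
          →ₗ[PowerSeries k]
          (PowerSeries k ⧸ Ideal.span {(PowerSeries.X : PowerSeries k) ^ (p * a)})),
        ∀ z : PowerSeries k ⧸ Ideal.span {(PowerSeries.X : PowerSeries k) ^ (p * a)},
          ψ (α z) = (PowerSeries.X : PowerSeries k) ^ (e * b) • z := by
  rintro ⟨α, ψ, h⟩
  exact statement3_general (IsRegular.of_ne_zero PowerSeries.X_ne_zero).left
    PowerSeries.X_prime.not_isUnit (add_mul_lt_mul_of_lt_sub_one (hb1.trans hba) hba he) ⟨α, ψ, h⟩
end

section
/- Let k be a field of characteristic p > 0, and let A₀ be a k-algebra which is an integral domain. Fix an integer n ≥ 1 and a matrix B = (b_{ij}) ∈ M_{n×n}(A₀). Then there exists a nonzero element f ∈ A₀, depending only on B (not on C), such that for every column vector C = (c₁, …, cₙ) ∈ A₀ⁿ, the A₀-algebra A₁ := A₀[x₁, …, xₙ]/(x₁ − c₁ − Σⱼ b_{1j}xⱼᵖ, …, xₙ − cₙ − Σⱼ b_{nj}xⱼᵖ) parametrizing the solutions of the Artin–Schreier system x = B·x^{[p]} + C satisfies: A₁[1/f] is a finite étale A₀[1/f]-algebra (i.e.,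 it is module-finite and étale over A₀[1/f]). -/
open TensorProduct

/-!
Let `q > 1` be a power of the characteristic `p`, and let `T` be the algebra of those polynomials
whose class in `A[x₁, …, xₙ] / (x - B x^{[q]} - C)` is integral over `A` for every `C` at once.
Then `T` is integrally closed in `A[x₁, …, xₙ]` and contains every `xᵢ - Σⱼ bᵢⱼ xⱼ^q`. An `f ≠ 0`
with `f xᵢ ∈ T` for all `i` depends only on `B`, and inverting it makes all these algebras finite.

To find `f`, choose a maximal subfamily `(xₖ)`, `k ∈ s`, of the `xᵢ` that is linearly independent
modulo `T`. Some `d ≠ 0` brings every `d xᵢ` into the span of the `xₖ` modulo `T`. By Frobenius,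
every `d^q xᵢ^q` is in the span of the `xₖ^q` modulo `T`, and therefore so is every `d^q xᵢ`.
Since the `d^q xₖ` are independent modulo `T`, Cramer's rule inverts these relations: some `a ≠ 0`
brings every `a xₖ^q` into the span of the `xₖ` modulo `T`. Thus the `a xₖ` are integral over `T`,
hence lie in `T`, which contradicts independence unless `s` is empty; but then every `d xᵢ ∈ T`.

Étaleness needs no localization: as `q = 0` in `A`, the Jacobian matrix of the defining equations
is the identity.
-/

section LinearAlgebra

lemma mem_span_sup_iff_mkQ_mem_span {R M : Type*} [Ring R] [AddCommGroup M] [Module R M]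
    {N : Submodule R M} {s : Set M} {y : M} :
    y ∈ Submodule.span R s ⊔ N ↔ N.mkQ y ∈ Submodule.span R (N.mkQ '' s) := by
  rw [sup_comm, ← Submodule.comap_map_mkQ, Submodule.mem_comap, Submodule.map_span]

variable {R M ι : Type*} [CommRing R] [AddCommGroup M] [Module R M]

lemma sum_smul_sum_smul {κ : Type*} [Fintype ι] [Fintype κ] (v : ι → R) (B : Matrix ι κ R)
    (y : κ → M) :
    ∑ i, v i • ∑ j, B i j • y j = ∑ j, (Matrix.vecMul v B) j • y j := by
  simp_rw [Finset.smul_sum, smul_smul, Matrix.vecMul, dotProduct, Finset.sum_smul]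
  exact Finset.sum_comm

lemma det_smul_eq_sum_adjugate_smul [Fintype ι] [DecidableEq ι] (B : Matrix ι ι R) (y : ι → M)
    (k : ι) : B.det • y k = ∑ i, B.adjugate k i • ∑ j, B i j • y j := by
  rw [sum_smul_sum_smul, ← Matrix.mul_apply_eq_vecMul, Matrix.adjugate_mul]
  simp [Matrix.one_apply]

variable [IsDomain R]

lemma linearIndependent_const_smul {v : ι → M} (hv : LinearIndependent R v) {d : R}
    (hd : d ≠ 0) : LinearIndependent R fun i => d • v i := by
  refine linearIndependent_iff'.mpr fun s g hg i hi => ?_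
  have := linearIndependent_iff'.mp hv s (fun i => g i * d) (by simpa [mul_smul] using hg) i hi
  exact (mul_eq_zero.mp this).resolve_right hd

lemma exists_linearIndepOn_and_smul_mem_span [Finite ι] (v : ι → M) :
    ∃ (s : Set ι) (d : R), d ≠ 0 ∧ LinearIndepOn R v s ∧
      ∀ i, d • v i ∈ Submodule.span R (v '' s) := by
  classical
  cases nonempty_fintype ι
  obtain ⟨s, hs, hmax⟩ := exists_maximal_linearIndepOn R v
  have hdep (i : ι) : ∃ a : R, a ≠ 0 ∧ a • v i ∈ Submodule.span R (v '' s) := by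
    by_cases hi : i ∈ s
    · exact ⟨1, one_ne_zero, by rw [one_smul]; exact Submodule.subset_span ⟨i, hi, rfl⟩⟩
    · exact hmax i hi
  choose a ha hav using hdep
  refine ⟨s, ∏ i, a i, Finset.prod_ne_zero_iff.mpr fun i _ => ha i, hs, fun i => ?_⟩
  rw [← Finset.prod_erase_mul _ _ (Finset.mem_univ i), mul_smul]
  exact Submodule.smul_mem _ _ (hav i)

lemma det_ne_zero_of_linearIndependent [Fintype ι] [DecidableEq ι] {B : Matrix ι ι R}
    {y : ι → M} (h : LinearIndependent R fun i => ∑ j, B i j • y j) : B.det ≠ 0 := by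
  intro hdet
  obtain ⟨v, hv, hvB⟩ := Matrix.exists_vecMul_eq_zero_iff.mpr hdet
  refine hv (funext (Fintype.linearIndependent_iff.mp h v ?_))
  simp [sum_smul_sum_smul, hvB]

lemma exists_smul_mem_span_of_linearIndependent [Finite ι] {y z : ι → M}
    (hz : LinearIndependent R z) (hzy : ∀ i, z i ∈ Submodule.span R (Set.range y)) :
    ∃ d : R, d ≠ 0 ∧ ∀ i, d • y i ∈ Submodule.span R (Set.range z) := by
  classical
  cases nonempty_fintype ι
  simp_rw [Submodule.mem_span_range_iff_exists_fun] at hzy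
  choose B hB using hzy
  obtain rfl : (fun i => ∑ j, B i j • y j) = z := funext hB
  refine ⟨(Matrix.of B).det, det_ne_zero_of_linearIndependent hz, fun k => ?_⟩
  rw [det_smul_eq_sum_adjugate_smul]
  exact Submodule.sum_mem _ fun i _ =>
    Submodule.smul_mem _ _ (Submodule.subset_span (Set.mem_range_self i))

end LinearAlgebra

section Integrality

variable {A S ι : Type*} [CommRing A] [CommRing S] [Algebra A S]

lemma prod_pow_mem_span_image_Iic [Fintype ι] {q : ℕ} (hq : 1 < q) {x : ι → S}
    (hx : ∀ i, x i ^ q ∈ Submodule.span A (insert 1 (Set.range x))) (s : ι → ℕ) :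
    ∏ i, x i ^ s i ∈
      Submodule.span A ((fun t : ι → ℕ => ∏ i, x i ^ t i) '' Set.Iic fun _ => q - 1) := by
  classical
  let M := Submodule.span A ((fun t : ι → ℕ => ∏ i, x i ^ t i) '' Set.Iic fun _ => q - 1)
  induction hd : ∑ i, s i using Nat.strong_induction_on generalizing s with
  | _ d ih =>
    by_cases hs : ∀ i, s i ≤ q - 1
    · exact Submodule.subset_span ⟨s, hs, rfl⟩
    · obtain ⟨i, hi⟩ := not_forall.mp hs
      have hle : (Pi.single i q : ι → ℕ) ≤ s := by
        intro j
        obtain rfl | hj := eq_or_ne j i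
        · rw [Pi.single_eq_same]; exact Nat.le_of_pred_lt (not_le.mp hi)
        · rw [Pi.single_eq_of_ne hj]; exact Nat.zero_le _
      obtain ⟨t, rfl⟩ := exists_add_of_le hle
      have hprod (j : ι) (m : ℕ) :
          ∏ l, x l ^ ((Pi.single j m : ι → ℕ) + t) l = x j ^ m * ∏ l, x l ^ t l := by
        simp only [Pi.add_apply, pow_add, Finset.prod_mul_distrib, Pi.single_apply, pow_ite,
          pow_zero, Finset.prod_ite_eq', Finset.mem_univ, if_true]
      have hsum (j : ι) (m : ℕ) : ∑ l, ((Pi.single j m : ι → ℕ) + t) l = m + ∑ l, t l := by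
        simp [Finset.sum_add_distrib]
      rw [hsum] at hd
      rw [hprod]
      suffices Submodule.span A (insert 1 (Set.range x)) ≤
          M.comap (LinearMap.mulRight A (∏ l, x l ^ t l)) from this (hx i)
      rw [Submodule.span_le, Set.insert_subset_iff, Set.range_subset_iff]
      refine ⟨?_, fun j => ?_⟩
      · simpa using ih _ (by omega) t rfl
      · have := ih (1 + ∑ l, t l) (by omega) (Pi.single j 1 + t) (hsum j 1)
        rwa [hprod, pow_one] at this

lemma isIntegral_of_pow_mem_span [Finite ι] {q : ℕ} (hq : 1 < q) {x : ι → S}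
    (hx : ∀ i, x i ^ q ∈ Submodule.span A (insert 1 (Set.range x))) (i : ι) :
    IsIntegral A (x i) := by
  classical
  cases nonempty_fintype ι
  have hspan : Subalgebra.toSubmodule (Algebra.adjoin A (Set.range x)) =
      Submodule.span A ((fun t : ι → ℕ => ∏ i, x i ^ t i) '' Set.Iic fun _ => q - 1) := by
    refine le_antisymm ?_ (Submodule.span_le.mpr ?_)
    · rw [Algebra.adjoin_eq_span, Submodule.span_le]
      intro y hy
      obtain ⟨s, rfl⟩ := Submonoid.exists_of_mem_closure_range x y hy
      exact prod_pow_mem_span_image_Iic hq hx s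
    · rintro _ ⟨t, -, rfl⟩
      exact Subalgebra.prod_mem _ fun j _ =>
        Subalgebra.pow_mem _ (Algebra.subset_adjoin (Set.mem_range_self j)) _
  exact .of_mem_of_fg _ (hspan ▸ Submodule.fg_span ((Set.finite_Iic _).image _)) _
    (Algebra.subset_adjoin (Set.mem_range_self i))

lemma smul_mem_of_smul_pow_mem_span_sup [Finite ι] (T : Subalgebra A S)
    [IsIntegrallyClosedIn T S] {q : ℕ} (hq : 1 < q) {a : A} {x : ι → S}
    (hx : ∀ i, a • x i ^ q ∈ Submodule.span A (Set.range x) ⊔ Subalgebra.toSubmodule T) (i : ι) :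
    a • x i ∈ T := by
  refine Subring.isIntegrallyClosedIn_iff.mp ‹IsIntegrallyClosedIn T S› <|
    isIntegral_of_pow_mem_span (x := fun i => a • x i) hq (fun k => ?_) i
  let P := Submodule.span T (insert 1 (Set.range fun i => a • x i))
  obtain ⟨m, rfl⟩ := Nat.exists_eq_add_of_le' hq
  -- `(a xₖ)^q = a^(q-1) (a xₖ^q)`, and the factor `a^(q-1)` makes each `xⱼ` a multiple of `a xⱼ`.
  have hle : Submodule.span A (Set.range x) ⊔ Subalgebra.toSubmodule T ≤
      (P.restrictScalars A).comap (LinearMap.lsmul A S (a ^ (m + 1))) := by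
    refine sup_le (Submodule.span_le.mpr ?_) fun t ht => ?_
    · rintro _ ⟨j, rfl⟩
      have : a • x j ∈ P.restrictScalars A :=
        Submodule.subset_span (Set.mem_insert_of_mem _ ⟨j, rfl⟩)
      simpa [pow_succ, mul_smul] using (P.restrictScalars A).smul_mem (a ^ m) this
    · have hone : (1 : S) ∈ P := Submodule.subset_span (Set.mem_insert _ _)
      have : t ∈ P := by simpa [Subalgebra.smul_def] using P.smul_mem ⟨t, ht⟩ hone
      exact (P.restrictScalars A).smul_mem _ this
  rw [smul_pow, pow_succ a, mul_smul]
  exact hle (hx k)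

lemma pow_mem_span_image_pow (p e : ℕ) [ExpChar S p] {s : Set S} {y : S}
    (hy : y ∈ Submodule.span A s) :
    y ^ p ^ e ∈ Submodule.span A ((· ^ p ^ e) '' s) := by
  induction hy using Submodule.span_induction with
  | mem y hy => exact Submodule.subset_span ⟨y, hy, rfl⟩
  | zero => simp [zero_pow (pow_pos (expChar_pos S p) e).ne']
  | add y z _ _ hy hz => rw [add_pow_expChar_pow]; exact add_mem hy hz
  | smul a y _ hy => rw [smul_pow]; exact Submodule.smul_mem _ _ hy

lemma isIntegrallyClosedIn_iInf_comap_integralClosure {κ : Type*} {Q : κ → Type*}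
    [∀ c, CommRing (Q c)] [∀ c, Algebra A (Q c)] (φ : ∀ c, S →ₐ[A] Q c) :
    IsIntegrallyClosedIn ↥(⨅ c, (integralClosure A (Q c)).comap (φ c)) S := by
  refine Subring.isIntegrallyClosedIn_iff.mpr fun {x} hx => Algebra.mem_iInf.mpr fun c => ?_
  let ψ := ((φ c).comp (Subalgebra.val (⨅ c, (integralClosure A (Q c)).comap (φ c)))).codRestrict
    (integralClosure A (Q c)) fun t => Algebra.mem_iInf.mp t.2 c
  have : IsIntegral (integralClosure A (Q c)) (φ c x) :=
    hx.map_of_comp_eq ψ.toRingHom (φ c).toRingHom rfl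
  exact isIntegral_trans _ this

lemma finite_tensorProduct_of_isIntegral_smul {L : Type*} [CommRing L] [Algebra A L] [Finite ι]
    {f : A} (hf : IsUnit (algebraMap A L f)) {x : ι → S}
    (hgen : Algebra.adjoin A (Set.range x) = ⊤) (hx : ∀ i, IsIntegral A (f • x i)) :
    Module.Finite L (L ⊗[A] S) := by
  obtain ⟨u, hu⟩ := hf.exists_left_inv
  have hint : ∀ y ∈ ((1 : L) ⊗ₜ[A] ·) '' Set.range x, IsIntegral L y := by
    rintro _ ⟨_, ⟨i, rfl⟩, rfl⟩
    have := (hx i).tmul u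
    rwa [← TensorProduct.smul_tmul, Algebra.smul_def, mul_comm, hu] at this
  have hfin := fg_adjoin_of_finite ((Set.finite_range x).image _) hint
  rw [Algebra.TensorProduct.adjoin_one_tmul_image_eq_top _ hgen] at hfin
  exact ⟨hfin⟩

end Integrality

section IntegrallyClosed

variable {A S ι : Type*} [CommRing A] [IsDomain A] [CommRing S] [Algebra A S] (T : Subalgebra A S)
  [IsIntegrallyClosedIn T S]

lemma isEmpty_of_linearIndependent_mkQ [Finite ι] {q : ℕ} (hq : 1 < q) {d : A} (hd : d ≠ 0)
    {x : ι → S} (hlin : LinearIndependent A fun i => (Subalgebra.toSubmodule T).mkQ (x i))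
    (hx : ∀ i, d • x i ∈ Submodule.span A (Set.range (x · ^ q)) ⊔ Subalgebra.toSubmodule T) :
    IsEmpty ι := by
  let π := (Subalgebra.toSubmodule T).mkQ
  obtain ⟨a, ha, hpow⟩ : ∃ a : A, a ≠ 0 ∧ ∀ i, a • π (x i ^ q) ∈
      Submodule.span A (Set.range fun i => d • π (x i)) :=
    exists_smul_mem_span_of_linearIndependent (linearIndependent_const_smul hlin hd) fun i => by
      simpa only [mem_span_sup_iff_mkQ_mem_span, ← Set.range_comp, map_smul] using! hx i
  have hmem : ∀ i, a • x i ∈ T := smul_mem_of_smul_pow_mem_span_sup T hq fun k => by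
    rw [mem_span_sup_iff_mkQ_mem_span, ← Set.range_comp, map_smul]
    refine Submodule.span_le.mpr ?_ (hpow k)
    rintro _ ⟨j, rfl⟩
    exact Submodule.smul_mem _ _ (Submodule.subset_span (Set.mem_range_self j))
  have hzero (i : ι) : a • π (x i) = 0 := (Submodule.Quotient.mk_eq_zero _).mpr (hmem i)
  exact ⟨fun i => ha (hlin.smul_left_injective i ((hzero i).trans (zero_smul A _).symm))⟩

theorem exists_smul_mem_of_sub_sum_smul_pow_mem [Fintype ι] {p e : ℕ} [ExpChar S p]
    (hq : 1 < p ^ e) {B : Matrix ι ι A} {x : ι → S}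
    (hx : ∀ i, x i - ∑ j, B i j • x j ^ p ^ e ∈ T) : ∃ f : A, f ≠ 0 ∧ ∀ i, f • x i ∈ T := by
  obtain ⟨s, d, hd, hlin, hspan⟩ := exists_linearIndepOn_and_smul_mem_span (R := A)
    fun i => (Subalgebra.toSubmodule T).mkQ (x i)
  have hpow (i : ι) : d ^ p ^ e • x i ^ p ^ e ∈
      Submodule.span A (Set.range fun j : s => x j ^ p ^ e) ⊔ Subalgebra.toSubmodule T := by
    have hsup : d • x i ∈ Submodule.span A (x '' s) ⊔ Subalgebra.toSubmodule T := by
      rw [mem_span_sup_iff_mkQ_mem_span, Set.image_image, map_smul]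
      exact hspan i
    obtain ⟨y, hy, t, ht, hyt⟩ := Submodule.mem_sup.mp hsup
    rw [← smul_pow, ← hyt, add_pow_expChar_pow]
    refine Submodule.add_mem_sup ?_ (T.pow_mem ht _)
    rw [← Set.image_eq_range (x · ^ p ^ e), ← Set.image_image (· ^ p ^ e) x]
    exact pow_mem_span_image_pow p e hy
  have hs : IsEmpty s := by
    refine isEmpty_of_linearIndependent_mkQ T hq (pow_ne_zero (p ^ e) hd) hlin fun i => ?_
    rw [← sub_add_cancel (x i) (∑ j, B i j • x j ^ p ^ e), smul_add, Finset.smul_sum]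
    refine add_mem (Submodule.mem_sup_right (T.smul_mem (hx i) _)) (sum_mem fun j _ => ?_)
    rw [smul_comm]
    exact Submodule.smul_mem _ _ (hpow j)
  refine ⟨d, hd, fun i => ?_⟩
  have hzero := hspan i
  rw [Set.isEmpty_coe_sort.mp hs, Set.image_empty, Submodule.span_empty, Submodule.mem_bot] at hzero
  exact (Submodule.Quotient.mk_eq_zero _).mp hzero

end IntegrallyClosed

section ArtinSchreierAlgebra

open MvPolynomial

variable {A ι : Type*} [CommRing A]

lemma adjoin_range_mkₐ_X (I : Ideal (MvPolynomial ι A)) :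
    Algebra.adjoin A (Set.range fun i => Ideal.Quotient.mkₐ A I (X i)) = ⊤ := by
  rw [Set.range_comp', ← AlgHom.map_adjoin, adjoin_range_X, Algebra.map_top, AlgHom.range_eq_top]
  exact Ideal.Quotient.mkₐ_surjective A I

variable [Fintype ι]

/-- The `i`-th equation `xᵢ - cᵢ - Σⱼ bᵢⱼ xⱼ^q` of the system `x = B x^{[q]} + C`, for an arbitrary
exponent `q`. -/
noncomputable def artinSchreierRelation (q : ℕ) (B : Matrix ι ι A) (C : ι → A) (i : ι) :
    MvPolynomial ι A :=
  X i - MvPolynomial.C (C i) - ∑ j, MvPolynomial.C (B i j) * X j ^ q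

/-- The `A`-algebra `A[x₁, …, xₙ] / (x - B x^{[q]} - C)` parametrizing the solutions of
`x = B x^{[q]} + C`. It is an abbreviation so that the instances on quotient rings apply to it. -/
abbrev ArtinSchreierAlgebra (q : ℕ) (B : Matrix ι ι A) (C : ι → A) : Type _ :=
  MvPolynomial ι A ⧸ Ideal.span (Set.range (artinSchreierRelation q B C))

lemma pderiv_artinSchreierRelation [DecidableEq ι] {q : ℕ} (hq : (q : A) = 0) (B : Matrix ι ι A)
    (C : ι → A) (i j : ι) :
    pderiv j (artinSchreierRelation q B C i) = (1 : Matrix ι ι (MvPolynomial ι A)) i j := by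
  have hq' : (q : MvPolynomial ι A) = 0 := by rw [← map_natCast MvPolynomial.C, hq, map_zero]
  simp [artinSchreierRelation, pderiv_X, hq', Pi.single_apply, Matrix.one_apply]

theorem etale_artinSchreierAlgebra {q : ℕ} (hq : (q : A) = 0) (B : Matrix ι ι A) (C : ι → A) :
    Algebra.Etale A (ArtinSchreierAlgebra q B C) := by
  classical
  let P : Algebra.PreSubmersivePresentation A (ArtinSchreierAlgebra q B C) ι ι :=
    .naive id Function.injective_id
  have hjac : P.jacobiMatrix = 1 := by
    ext1 i j
    simp [P, pderiv_artinSchreierRelation hq, Matrix.one_apply, eq_comm]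
  have hunit : IsUnit P.jacobian := by simp [P.jacobian_eq_jacobiMatrix_det, hjac]
  have := Algebra.SubmersivePresentation.isStandardSmoothOfRelativeDimension (n := 0) ⟨P, hunit⟩
    (Nat.sub_self _)
  infer_instance

lemma mkₐ_X_sub_sum_smul_X_pow (q : ℕ) (B : Matrix ι ι A) (C : ι → A) (i : ι) :
    (Ideal.Quotient.mkₐ A _ (X i - ∑ j, B i j • X j ^ q) : ArtinSchreierAlgebra q B C) =
      algebraMap A _ (C i) := by
  have hrel : X i - ∑ j, B i j • X j ^ q - algebraMap A _ (C i) =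
      artinSchreierRelation q B C i := by
    simp only [artinSchreierRelation, smul_eq_C_mul, algebraMap_eq]
    exact sub_right_comm _ _ _
  rw [← sub_eq_zero, ← (Ideal.Quotient.mkₐ A _).commutes, ← map_sub, hrel]
  exact Ideal.Quotient.eq_zero_iff_mem.mpr (Ideal.subset_span (Set.mem_range_self i))

theorem exists_forall_isIntegral_smul_mkₐ_X [IsDomain A] {p e : ℕ} [ExpChar A p] (hq : 1 < p ^ e)
    (B : Matrix ι ι A) :
    ∃ f : A, f ≠ 0 ∧ ∀ (C : ι → A) (i : ι),
      IsIntegral A (f • (Ideal.Quotient.mkₐ A _ (X i) : ArtinSchreierAlgebra (p ^ e) B C)) := by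
  let mk (C : ι → A) : MvPolynomial ι A →ₐ[A] ArtinSchreierAlgebra (p ^ e) B C :=
    Ideal.Quotient.mkₐ A _
  let T := ⨅ C, (integralClosure A (ArtinSchreierAlgebra (p ^ e) B C)).comap (mk C)
  have : IsIntegrallyClosedIn T (MvPolynomial ι A) :=
    isIntegrallyClosedIn_iInf_comap_integralClosure mk
  have hT (i : ι) : X i - ∑ j, B i j • X j ^ p ^ e ∈ T := Algebra.mem_iInf.mpr fun C => by
    rw [Subalgebra.mem_comap, mkₐ_X_sub_sum_smul_X_pow]
    exact (integralClosure A _).algebraMap_mem _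
  obtain ⟨f, hf, hfT⟩ := exists_smul_mem_of_sub_sum_smul_pow_mem T hq hT
  refine ⟨f, hf, fun C i => ?_⟩
  rw [← map_smul]
  exact Algebra.mem_iInf.mp (hfT i) C

end ArtinSchreierAlgebra

theorem statement7_general {p e : ℕ} (hp : p ≠ 0) (he : e ≠ 0) {A ι : Type*} [CommRing A]
    [IsDomain A] [CharP A p] [Fintype ι] (B : Matrix ι ι A) :
    ∃ f : A, f ≠ 0 ∧ ∀ C : ι → A,
      Module.Finite (Localization.Away f)
        (Localization.Away f ⊗[A] ArtinSchreierAlgebra (p ^ e) B C) ∧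
      Algebra.Etale (Localization.Away f)
        (Localization.Away f ⊗[A] ArtinSchreierAlgebra (p ^ e) B C) := by
  have : Fact p.Prime := ⟨(CharP.char_is_prime_or_zero A p).resolve_right hp⟩
  have hq : 1 < p ^ e := Nat.one_lt_pow he (Fact.out : p.Prime).one_lt
  have hq0 : ((p ^ e : ℕ) : A) = 0 := by rw [Nat.cast_pow, CharP.cast_eq_zero, zero_pow he]
  obtain ⟨f, hf, hint⟩ := exists_forall_isIntegral_smul_mkₐ_X hq B
  refine ⟨f, hf, fun C => ⟨?_, ?_⟩⟩
  · exact finite_tensorProduct_of_isIntegral_smul (IsLocalization.Away.algebraMap_isUnit f)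
      (adjoin_range_mkₐ_X _) (hint C)
  · have := etale_artinSchreierAlgebra hq0 B C
    infer_instance

/-- let `k` be a field of characteristic `p > 0`, `A₀` a `k`-algebra which
is an integral domain, `n ≥ 1` and `B ∈ Mₙ(A₀)`.  Then there is a nonzero `f ∈ A₀`,
depending only on `B` (not on `C`), such that for every `C ∈ A₀ⁿ` the `A₀`-algebra
`A₁ = A₀[x₁,…,xₙ]/(xᵢ - cᵢ - Σⱼ b_{ij} xⱼᵖ)` parametrizing solutions of the
Artin–Schreier system `x = B·x^{[p]} + C` becomes finite étale over `A₀[1/f]` after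
inverting `f`; the localization `A₁[1/f]` is realized as the base change
`A₀[1/f] ⊗_{A₀} A₁`. -/
theorem statement7 (p : ℕ) (hp : p ≠ 0) (k : Type*) [Field k] [CharP k p]
    (A₀ : Type*) [CommRing A₀] [IsDomain A₀] [Algebra k A₀]
    (n : ℕ) (hn : 1 ≤ n) (B : Matrix (Fin n) (Fin n) A₀) :
    ∃ f : A₀, f ≠ 0 ∧
      ∀ C : Fin n → A₀,
        Module.Finite (Localization.Away f)
          (Localization.Away f ⊗[A₀] (MvPolynomial (Fin n) A₀ ⧸
            Ideal.span (Set.range fun i : Fin n =>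
              MvPolynomial.X i - MvPolynomial.C (C i)
                - ∑ j : Fin n, MvPolynomial.C (B i j) * MvPolynomial.X j ^ p))) ∧
        Algebra.Etale (Localization.Away f)
          (Localization.Away f ⊗[A₀] (MvPolynomial (Fin n) A₀ ⧸
            Ideal.span (Set.range fun i : Fin n =>
              MvPolynomial.X i - MvPolynomial.C (C i)
                - ∑ j : Fin n, MvPolynomial.C (B i j) * MvPolynomial.X j ^ p))) := by
  have := charP_of_injective_algebraMap (algebraMap k A₀).injective p
  exact pow_one p ▸ statement7_general hp one_ne_zero B
end

section
/- Let k be a field of characteristic p > 0, let A₀ be a k-algebra which is an integral domain, and let b, c ∈ A₀ with b ≠ 0. Then the A₀-algebra A₁ := A₀[x]/(x − c − b·xᵖ) is étale over A₀, and the localization A₁[1/b] is a finite free A₀[1/b]-module of rank p (since after inverting b the defining equation becomes the monic equation xᵖ = b⁻¹x − b⁻¹c). -/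
open TensorProduct

set_option maxHeartbeats 1000000

/-!
The derivative of `f = x - c - b xⁿ` is `1 - n b xⁿ⁻¹`, which is `1` when `n = 0` in the base ring.
So every root of `f` is simple, Newton's method lifts roots uniquely along square-zero extensions,
and `R[x]/(f)` is étale. Where `b` becomes invertible, `f` is a unit multiple of a monic
polynomial of degree `n`, so the powers `1, x, …, xⁿ⁻¹` form a basis.
-/

section

open Polynomial AdjoinRoot

variable {R : Type*} [CommRing R]

section Etale

variable {f : R[X]}

theorem existsUnique_sub_mem_and_aeval_eq_zero {S : Type*} [CommRing S] [Algebra R S]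
    {I : Ideal S} (hI : IsNilpotent I) {x : S} (hx : aeval x f ∈ I)
    (hx' : IsUnit (aeval x (derivative f))) :
    ∃! r, x - r ∈ I ∧ aeval r f = 0 := by
  have isNilpotent_of_mem {y : S} (hy : y ∈ I) : IsNilpotent y := by
    obtain ⟨n, hn⟩ := hI
    exact ⟨n, hn.le (Ideal.pow_mem_pow hy n)⟩
  obtain ⟨r, ⟨hxr, hr⟩, r_unique⟩ :=
    existsUnique_nilpotent_sub_and_aeval_eq_zero (isNilpotent_of_mem hx) hx'
  refine ⟨r, ⟨?_, hr⟩, fun s ⟨hxs, hs⟩ ↦ r_unique s ⟨isNilpotent_of_mem hxs, hs⟩⟩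
  -- `x - r` is only known to be nilpotent; uniqueness of simple roots in `S ⧸ I` puts it in `I`.
  let π := Ideal.Quotient.mkₐ R I
  have hπx : aeval (π x) f = 0 := by
    rw [aeval_algHom_apply]; exact Ideal.Quotient.eq_zero_iff_mem.mpr hx
  have hπr : aeval (π r) f = 0 := by rw [aeval_algHom_apply, hr, map_zero]
  have hπx' : IsUnit (aeval (π x) (derivative f)) := by
    rw [aeval_algHom_apply]; exact hx'.map π
  have hπxr : IsNilpotent (π x - π r) := by simpa only [map_sub] using hxr.map π
  have hπ : π x = π r :=
    (existsUnique_nilpotent_sub_and_aeval_eq_zero (hπx ▸ IsNilpotent.zero) hπx').unique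
      ⟨by simp only [sub_self, IsNilpotent.zero], hπx⟩ ⟨hπxr, hπr⟩
  exact Ideal.Quotient.eq.mp hπ

theorem formallyEtale_adjoinRoot (hf : IsUnit (aeval (root f) (derivative f))) :
    Algebra.FormallyEtale R (AdjoinRoot f) := by
  refine Algebra.FormallyEtale.iff_comp_bijective.mpr fun S _ _ I hI ↦
    Function.bijective_iff_existsUnique _ |>.mpr fun φ ↦ ?_
  have hI' : IsNilpotent I := ⟨2, hI⟩
  obtain ⟨x, hx⟩ := Ideal.Quotient.mkₐ_surjective R I (φ (root f))
  have hxf : aeval x f ∈ I := by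
    rw [← Ideal.Quotient.eq_zero_iff_mem, ← Ideal.Quotient.mkₐ_eq_mk R, ← aeval_algHom_apply, hx,
      aeval_algHom_eq_zero]
  have hxf' : IsUnit (aeval x (derivative f)) := by
    rw [← IsNilpotent.isUnit_quotient_mk_iff hI', ← Ideal.Quotient.mkₐ_eq_mk R,
      ← aeval_algHom_apply, hx, aeval_algHom_apply]
    exact hf.map φ
  have comp_eq_iff (ψ : AdjoinRoot f →ₐ[R] S) :
      (Ideal.Quotient.mkₐ R I).comp ψ = φ ↔ x - ψ (root f) ∈ I := by
    rw [← Ideal.Quotient.eq, ← Ideal.Quotient.mkₐ_eq_mk R, hx, eq_comm]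
    exact ⟨fun h ↦ DFunLike.congr_fun h _, fun h ↦ algHom_ext h⟩
  obtain ⟨r, ⟨hxr, hr⟩, r_unique⟩ := existsUnique_sub_mem_and_aeval_eq_zero hI' hxf hxf'
  obtain ⟨ψ, rfl⟩ : ∃ ψ : AdjoinRoot f →ₐ[R] S, ψ (root f) = r :=
    ⟨liftAlgHom f (Algebra.ofId R S) r hr, liftAlgHom_root ..⟩
  exact ⟨ψ, (comp_eq_iff ψ).mpr hxr, fun ψ' hψ' ↦
    algHom_ext (r_unique _ ⟨(comp_eq_iff ψ').mp hψ', aeval_algHom_eq_zero f ψ'⟩)⟩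

theorem etale_adjoinRoot (hf : IsUnit (aeval (root f) (derivative f))) :
    Algebra.Etale R (AdjoinRoot f) where
  formallyEtale := formallyEtale_adjoinRoot hf

end Etale

section Basis

/-- The basis `1, x, …, xᵈ⁻¹` of `R[x]/(g)` for `g` of degree `d` with unit leading coefficient,
transported from the quotient by the monic multiple of `g`. -/
noncomputable def adjoinRootBasis {g : R[X]} (hg : IsUnit g.leadingCoeff) :
    Module.Basis (Fin g.natDegree) R (AdjoinRoot g) :=
  have hmonic : (hg.unit⁻¹ • g).Monic := monic_of_isUnit_leadingCoeff_inv_smul hg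
  have hdegree : (hg.unit⁻¹ • g).natDegree = g.natDegree :=
    natDegree_smul_of_smul_regular g (isSMulRegular_of_group _)
  have hassoc : Associated (hg.unit⁻¹ • g) g := by
    rw [Units.smul_def, smul_eq_C_mul]
    exact associated_unit_mul_left g _ (isUnit_C.mpr (Units.isUnit _))
  ((powerBasis' hmonic).basis.reindex (finCongr hdegree)).map
    (algEquivOfAssociated R _ g hassoc).toLinearEquiv

/-- Base change of `R[x]/(f)` along `R → T`: Mathlib's `AdjoinRoot.tensorAlgEquiv` with `T ⊗[R] R`
identified with `T`. -/
noncomputable def tensorAdjoinRootEquiv (T : Type*) [CommRing T] [Algebra R T] (f : R[X]) :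
    T ⊗[R] AdjoinRoot f ≃ₐ[T] AdjoinRoot (f.map (algebraMap R T)) :=
  have hmap : (f.map (Algebra.TensorProduct.includeRight (A := T)).toRingHom).map
      (Algebra.TensorProduct.rid R T T : T ⊗[R] R →+* T) = f.map (algebraMap R T) := by
    rw [Polynomial.map_map]
    congr 1
    ext a
    simp [Algebra.algebraMap_eq_smul_one]
  (tensorAlgEquiv f _ rfl).trans
    (mapAlgEquiv (Algebra.TensorProduct.rid R T T) _ _ (.of_eq hmap))

end Basis

section ArtinSchreier

/-- The polynomial `x - c - b xⁿ`, whose roots are the solutions of the Artin–Schreier equation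
`x = b xⁿ + c`. -/
noncomputable def artinSchreierPoly (n : ℕ) (b c : R) : R[X] :=
  X - C c - C b * X ^ n

theorem map_artinSchreierPoly {T : Type*} [CommRing T] (φ : R →+* T) (n : ℕ) (b c : R) :
    (artinSchreierPoly n b c).map φ = artinSchreierPoly n (φ b) (φ c) := by
  simp [artinSchreierPoly]

theorem derivative_artinSchreierPoly {n : ℕ} (hn : (n : R) = 0) (b c : R) :
    derivative (artinSchreierPoly n b c) = 1 := by
  simp [artinSchreierPoly, derivative_X_pow, hn]

theorem natDegree_artinSchreierPoly {n : ℕ} (hn : 1 < n) {b : R} (hb : b ≠ 0) (c : R) :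
    (artinSchreierPoly n b c).natDegree = n := by
  have hpow : (C b * X ^ n).natDegree = n := natDegree_C_mul_X_pow n b hb
  have hlinear : (X - C c).natDegree < (C b * X ^ n).natDegree :=
    (natDegree_X_sub_C_le c).trans_lt (hn.trans_eq hpow.symm)
  rw [artinSchreierPoly, natDegree_sub_eq_right_of_natDegree_lt hlinear, hpow]

theorem leadingCoeff_artinSchreierPoly {n : ℕ} (hn : 1 < n) {b : R} (hb : b ≠ 0) (c : R) :
    (artinSchreierPoly n b c).leadingCoeff = -b := by
  rw [leadingCoeff, natDegree_artinSchreierPoly hn hb]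
  simp [artinSchreierPoly, coeff_X, coeff_C, hn.ne, (zero_lt_one.trans hn).ne']

theorem etale_adjoinRoot_artinSchreierPoly {n : ℕ} (hn : (n : R) = 0) (b c : R) :
    Algebra.Etale R (AdjoinRoot (artinSchreierPoly n b c)) :=
  etale_adjoinRoot (by simp only [derivative_artinSchreierPoly hn, map_one, isUnit_one])

/-- The basis `1, x, …, xⁿ⁻¹` of the base change of `R[x]/(x - c - b xⁿ)` to an algebra `T` in which
`b` is invertible. -/
noncomputable def tensorArtinSchreierBasis {T : Type*} [CommRing T] [Nontrivial T] [Algebra R T]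
    {n : ℕ} (hn : 1 < n) {b : R} (hb : IsUnit (algebraMap R T b)) (c : R) :
    Module.Basis (Fin n) T (T ⊗[R] AdjoinRoot (artinSchreierPoly n b c)) :=
  have hdegree : ((artinSchreierPoly n b c).map (algebraMap R T)).natDegree = n := by
    rw [map_artinSchreierPoly, natDegree_artinSchreierPoly hn hb.ne_zero]
  have hlead : IsUnit ((artinSchreierPoly n b c).map (algebraMap R T)).leadingCoeff := by
    rw [map_artinSchreierPoly, leadingCoeff_artinSchreierPoly hn hb.ne_zero]
    exact hb.neg
  ((adjoinRootBasis hlead).reindex (finCongr hdegree)).map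
    (tensorAdjoinRootEquiv T _).symm.toLinearEquiv

end ArtinSchreier

end

theorem statement9_general {R T : Type*} [CommRing R] [CommRing T] [Nontrivial T] [Algebra R T]
    {n : ℕ} (hn : n ≠ 0) (hnR : (n : R) = 0) {b : R} (hb : IsUnit (algebraMap R T b)) (c : R) :
    Algebra.Etale R (AdjoinRoot (artinSchreierPoly n b c)) ∧
    Module.Finite T (T ⊗[R] AdjoinRoot (artinSchreierPoly n b c)) ∧
    Module.Free T (T ⊗[R] AdjoinRoot (artinSchreierPoly n b c)) ∧
    Module.finrank T (T ⊗[R] AdjoinRoot (artinSchreierPoly n b c)) = n := by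
  have hn_ne_one : n ≠ 1 := by
    rintro rfl
    exact one_ne_zero (α := T) (by simpa using congr_arg (algebraMap R T) hnR)
  let B := tensorArtinSchreierBasis (show 1 < n by lia) hb c
  exact ⟨etale_adjoinRoot_artinSchreierPoly hnR b c, .of_basis B, .of_basis B,
    by rw [Module.finrank_eq_card_basis B, Fintype.card_fin]⟩

/-- let `k` be a field of characteristic `p > 0`, `A₀` a `k`-algebra which
is an integral domain, and `b, c ∈ A₀` with `b ≠ 0`.  Then `A₁ = A₀[x]/(x - c - b·xᵖ)`
is étale over `A₀`, and `A₁[1/b]` (realized as the base change `A₀[1/b] ⊗_{A₀} A₁`) is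
a finite free `A₀[1/b]`-module of rank `p`. -/
theorem statement9 (p : ℕ) (hp : p ≠ 0) (k : Type*) [Field k] [CharP k p]
    (A₀ : Type*) [CommRing A₀] [IsDomain A₀] [Algebra k A₀]
    (b c : A₀) (hb : b ≠ 0) :
    Algebra.Etale A₀ (Polynomial A₀ ⧸
      Ideal.span {Polynomial.X - Polynomial.C c - Polynomial.C b * Polynomial.X ^ p}) ∧
    Module.Finite (Localization.Away b)
      (Localization.Away b ⊗[A₀] (Polynomial A₀ ⧸
        Ideal.span {Polynomial.X - Polynomial.C c - Polynomial.C b * Polynomial.X ^ p})) ∧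
    Module.Free (Localization.Away b)
      (Localization.Away b ⊗[A₀] (Polynomial A₀ ⧸
        Ideal.span {Polynomial.X - Polynomial.C c - Polynomial.C b * Polynomial.X ^ p})) ∧
    Module.finrank (Localization.Away b)
      (Localization.Away b ⊗[A₀] (Polynomial A₀ ⧸
        Ideal.span {Polynomial.X - Polynomial.C c - Polynomial.C b * Polynomial.X ^ p})) = p := by
  have hp_zero : (p : A₀) = 0 := by
    rw [← map_natCast (algebraMap k A₀), CharP.cast_eq_zero, map_zero]
  have : Nontrivial (Localization.Away b) :=
    (IsLocalization.injective _ (powers_le_nonZeroDivisors_of_noZeroDivisors hb)).nontrivial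
  exact statement9_general hp hp_zero (IsLocalization.Away.algebraMap_isUnit b) c
end
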